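/- arXiv:1810.10577 — 9 statements merged into one kernel-verified Lean document; each statement's English description precedes it below -/
import Mathlib

section
/- Let G be the 3×3 toroidal chess graph. In the game of Cops and Robbers on G in which every cop is a knight and the robber is on foot, the cop number of G is exactly 2: two knight cops have a winning strategy, and one knight cop does not. -/
/-!
Modulo 3 the knight moves are exactly the four diagonal steps `(±1, ±1)`, so a knight at `c` threatens
every vertex except the four foot-neighbours of `c`.

*One knight loses.* The robber keeps himself, after each of his turns, on a foot-neighbour of the
knight. From such a position no knight move captures, and whatever the knight does the robber can
step back to a foot-neighbour of the knight's new vertex (`robber_reply`); hence the invariant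
`Evades` contradicts any win of the knight (`not_copsWin_one`).

*Two knights win.* Two knights on consecutive vertices of a line (row or column) leave only the third
vertex of that line unthreatened. Starting at `(0,0)` and `(1,0)`, the robber must sit at `(2,0)`. The
knights then occupy `(1,1)` and `(1,0)`, leaving only `(1,2)` safe, which the robber cannot reach.
-/

/-- Vertices of the `n × n` toroidal chess graph: pairs of coordinates mod `n`. -/
abbrev V (n : ℕ) : Type := ZMod n × ZMod n

/-- "On foot" moves (toroidal grid adjacency): the target differs from the current
vertex by `(±1,0)` or `(0,±1)` mod `n`. -/
def footMove (n : ℕ) (v w : V n) : Prop :=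
  w - v = (1, 0) ∨ w - v = (-1, 0) ∨ w - v = (0, 1) ∨ w - v = (0, -1)

/-- Knight moves: the target differs from the current vertex by `(±1,±2)` or
`(±2,±1)` mod `n`. -/
def knightMove (n : ℕ) (v w : V n) : Prop :=
  w - v = (1, 2) ∨ w - v = (1, -2) ∨ w - v = (-1, 2) ∨ w - v = (-1, -2) ∨
    w - v = (2, 1) ∨ w - v = (2, -1) ∨ w - v = (-2, 1) ∨ w - v = (-2, -1)

/-- One turn of a piece with allowable-move relation `R`: either stay on the current
vertex or move to an allowable vertex. -/
def stayOr {α : Type*} (R : α → α → Prop) (v w : α) : Prop := w = v ∨ R v w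

/-- `CopsWin copMove robMove c r t` holds when, from the position in which the `k`
cops occupy the vertices `c : Fin k → V n` (cop `i` moving by the relation
`copMove i`), the robber (moving by `robMove`) occupies `r`, and it is the cops'
turn iff `t = true`, the cops can force that after finitely many turns some cop
occupies the robber's vertex.  On the cops' turn every cop simultaneously either
stays or makes an allowable move; likewise for the robber on his turn. -/
inductive CopsWin {n k : ℕ} (copMove : Fin k → V n → V n → Prop)
    (robMove : V n → V n → Prop) : (Fin k → V n) → V n → Bool → Prop
  | caught {c : Fin k → V n} {r : V n} {t : Bool} (h : ∃ i, c i = r) :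
      CopsWin copMove robMove c r t
  | copsTurn {c : Fin k → V n} {r : V n} (c' : Fin k → V n)
      (h : ∀ i, stayOr (copMove i) (c i) (c' i))
      (hw : CopsWin copMove robMove c' r false) : CopsWin copMove robMove c r true
  | robTurn {c : Fin k → V n} {r : V n}
      (hw : ∀ r', stayOr robMove r r' → CopsWin copMove robMove c r' true) :
      CopsWin copMove robMove c r false

/-- The `k` cops have a winning strategy: they can choose starting vertices
(repetitions allowed) so that, whatever starting vertex the robber then chooses,
the cops (moving first) can force a capture in finitely many turns. -/
def CopsHaveWinningStrategy {n : ℕ} (k : ℕ) (copMove : Fin k → V n → V n → Prop)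
    (robMove : V n → V n → Prop) : Prop :=
  ∃ c : Fin k → V n, ∀ r : V n, CopsWin copMove robMove c r true

/-- The cop number of the `n × n` toroidal chess graph, for the game in which,
when there are `k` cops, cop `i` moves by the relation `copMove k i` and the
robber moves by `robMove`: the minimum number of cops having a winning strategy. -/
noncomputable def copNumber (n : ℕ) (copMove : ∀ k, Fin k → V n → V n → Prop)
    (robMove : V n → V n → Prop) : ℕ :=
  sInf {k | CopsHaveWinningStrategy k (copMove k) robMove}

instance (v w : V 3) : Decidable (footMove 3 v w) := by unfold footMove; infer_instance

instance (v w : V 3) : Decidable (knightMove 3 v w) := by unfold knightMove; infer_instance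

instance {α : Type*} [DecidableEq α] (R : α → α → Prop) (v w : α) [Decidable (R v w)] :
    Decidable (stayOr R v w) := by unfold stayOr; infer_instance

lemma not_copsWin_zero {n : ℕ} {m : Fin 0 → V n → V n → Prop} {q : V n → V n → Prop}
    {c : Fin 0 → V n} {r : V n} {t : Bool} : ¬ CopsWin m q c r t := by
  intro h
  induction h with
  | caught h => exact h.elim fun i _ => i.elim0
  | copsTurn _ _ _ ih => exact ih
  | @robTurn _ r _ ih => exact ih r (Or.inl rfl)

lemma robber_reply : ∀ c c' r : V 3, footMove 3 c r → stayOr (knightMove 3) c c' →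
    c' ≠ r ∧ ∃ r', stayOr (footMove 3) r r' ∧ footMove 3 c' r' := by
  decide

/-- The robber's invariant against one knight at `c`. On the knight's turn the robber is on a
foot-neighbour of `c`; on the robber's turn he is not caught and can reach such a neighbour. -/
def Evades (c r : V 3) : Bool → Prop
  | true => footMove 3 c r
  | false => c ≠ r ∧ ∃ r', stayOr (footMove 3) r r' ∧ footMove 3 c r'

lemma not_copsWin_one {c : Fin 1 → V 3} {r : V 3} {t : Bool}
    (h : CopsWin (fun _ : Fin 1 => knightMove 3) (footMove 3) c r t) : ¬ Evades (c 0) r t := by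
  induction h with
  | @caught c r t h =>
    obtain ⟨i, hi⟩ := h
    rw [Subsingleton.elim i 0] at hi
    cases t with
    | true =>
      -- staying put would capture at once, contrary to `robber_reply`
      exact fun hf => (robber_reply _ _ _ hf (Or.inl rfl)).1 hi
    | false => exact fun hf => hf.1 hi
  | copsTurn c' h _ ih => exact fun hf => ih (robber_reply _ _ _ hf (h 0))
  | robTurn _ ih =>
    rintro ⟨_, r', hr', hf⟩
    exact ih r' hr' hf

lemma not_win_one :
    ¬ CopsHaveWinningStrategy 1 (fun _ : Fin 1 => knightMove 3) (footMove 3) := by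
  rintro ⟨c, h⟩
  refine not_copsWin_one (h (c 0 + (1, 0))) ?_
  exact Or.inl (add_sub_cancel_left _ _)

/-- A knight threatening the robber's vertex captures, the other knights standing still. -/
lemma copsWin_of_threat {k : ℕ} {c : Fin k → V 3} {r : V 3} (i : Fin k)
    (h : stayOr (knightMove 3) (c i) r) :
    CopsWin (fun _ : Fin k => knightMove 3) (footMove 3) c r true := by
  refine .copsTurn (Function.update c i r) (fun j => ?_) (.caught ⟨i, by simp⟩)
  by_cases hj : j = i
  · subst hj; simpa using h
  · exact Or.inl (by simp [hj])

lemma win_two :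
    CopsHaveWinningStrategy 2 (fun _ : Fin 2 => knightMove 3) (footMove 3) := by
  refine ⟨![(0, 0), (1, 0)], fun r => ?_⟩
  have start : ∀ r : V 3, r = (2, 0) ∨
      ∃ i : Fin 2, stayOr (knightMove 3) ((![(0, 0), (1, 0)] : Fin 2 → V 3) i) r := by decide
  rcases start r with rfl | ⟨i, hi⟩
  · refine .copsTurn ![(1, 1), (1, 0)] (by decide) (.robTurn fun r' hr' => ?_)
    have trapped : ∀ r' : V 3, stayOr (footMove 3) (2, 0) r' →
        ∃ i : Fin 2, stayOr (knightMove 3) ((![(1, 1), (1, 0)] : Fin 2 → V 3) i) r' := by decide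
    obtain ⟨i, hi⟩ := trapped r' hr'
    exact copsWin_of_threat i hi
  · exact copsWin_of_threat i hi

/-- On the `3 × 3` toroidal chess graph, with every cop a knight
and the robber on foot, the cop number is exactly `2`: two knight cops have a
winning strategy, and one knight cop does not. -/
theorem copNumber_knights_footRobber_three_eq_two :
    copNumber 3 (fun _ _ => knightMove 3) (footMove 3) = 2 ∧
    CopsHaveWinningStrategy 2 (fun _ : Fin 2 => knightMove 3) (footMove 3) ∧
    ¬ CopsHaveWinningStrategy 1 (fun _ : Fin 1 => knightMove 3) (footMove 3) := by
  refine ⟨le_antisymm (Nat.sInf_le win_two) ?_, win_two, not_win_one⟩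
  refine le_csInf ⟨2, win_two⟩ fun k hk => ?_
  match k, hk with
  | 0, ⟨_, h⟩ => exact absurd (h 0) not_copsWin_zero
  | 1, hk => exact absurd hk not_win_one
  | k + 2, _ => omega
end

section
/- Let G be the 4×4 toroidal chess graph. In the game of Cops and Robbers on G in which every cop is a knight and the robber is on foot, the cop number of G is exactly 2: two knight cops have a winning strategy, and one knight cop does not. -/
instance (v w : V 4) : Decidable (footMove 4 v w) := by
  unfold footMove; infer_instance

instance (v w : V 4) : Decidable (knightMove 4 v w) := by
  unfold knightMove; infer_instance

instance {R : V 4 → V 4 → Prop} [∀ v w, Decidable (R v w)] (v w : V 4) :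
    Decidable (stayOr R v w) := by
  unfold stayOr; infer_instance

/-! ### Two knights win -/

lemma knightMove_antipode_of_footMove :
    ∀ r r' : V 4, footMove 4 r r' → knightMove 4 (r + (2, 2)) r' := by
  decide +kernel

/-- With the cops to move, the robber is captured at once if he stands on a vertex that some cop
occupies or attacks. -/
lemma copsWin_of_attack {k : ℕ} {c : Fin k → V 4} {r : V 4} (i : Fin k)
    (h : stayOr (knightMove 4) (c i) r) :
    CopsWin (fun _ => knightMove 4) (footMove 4) c r true := by
  refine .copsTurn (Function.update c i r) (fun j => ?_) (.caught ⟨i, by simp⟩)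
  by_cases hj : j = i
  · subst hj
    simpa using h
  · exact Or.inl (by simp [hj])

/-- The robber to move is lost when cop `i` stands on his antipode and cop `j` attacks him: cop `i`
answers every step, and cop `j` punishes staying put. -/
lemma copsWin_of_antipode {k : ℕ} {c : Fin k → V 4} {r : V 4} {i j : Fin k}
    (hi : c i = r + (2, 2)) (hj : knightMove 4 (c j) r) :
    CopsWin (fun _ => knightMove 4) (footMove 4) c r false := by
  refine .robTurn fun r' hr' => ?_
  rcases hr' with rfl | hr'
  · exact copsWin_of_attack j (Or.inr hj)
  · exact copsWin_of_attack i (Or.inr (hi ▸ knightMove_antipode_of_footMove r r' hr'))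

/-- The first turn of the two knights, started on `(0,0)` and `(0,1)`: they reach vertices `a`, `b`
that capture the robber or place one knight on his antipode while the other attacks him. -/
lemma exists_opening : ∀ r : V 4, ∃ a b : V 4,
    stayOr (knightMove 4) (0, 0) a ∧ stayOr (knightMove 4) (0, 1) b ∧
      (a = r ∨ b = r ∨ (a = r + (2, 2) ∧ knightMove 4 b r) ∨
        (b = r + (2, 2) ∧ knightMove 4 a r)) := by
  decide +kernel

lemma two_knights_win :
    CopsHaveWinningStrategy 2 (fun _ : Fin 2 => knightMove 4) (footMove 4) := by
  refine ⟨![(0, 0), (0, 1)], fun r => ?_⟩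
  obtain ⟨a, b, ha, hb, h⟩ := exists_opening r
  refine .copsTurn ![a, b] (Fin.forall_fin_two.2 ⟨ha, hb⟩) ?_
  rcases h with h | h | ⟨h, h'⟩ | ⟨h, h'⟩
  · exact .caught ⟨0, h⟩
  · exact .caught ⟨1, h⟩
  · exact copsWin_of_antipode (i := 0) (j := 1) h h'
  · exact copsWin_of_antipode (i := 1) (j := 0) h h'

/-! ### Fewer knights lose -/

lemma exists_escape : ∀ c r : V 4, c ≠ r →
    ∃ r' : V 4, stayOr (footMove 4) r r' ∧ ¬ stayOr (knightMove 4) c r' := by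
  decide +kernel

lemma exists_uncontrolled : ∀ c : V 4, ∃ r : V 4, ¬ stayOr (knightMove 4) c r := by
  decide +kernel

/-- A single knight wins only from positions where he has already caught the robber, or where he is
to move and catches him at once. -/
lemma controlled_of_copsWin {c : Fin 1 → V 4} {r : V 4} {t : Bool}
    (h : CopsWin (fun _ : Fin 1 => knightMove 4) (footMove 4) c r t) :
    c 0 = r ∨ (t = true ∧ stayOr (knightMove 4) (c 0) r) := by
  induction h with
  | caught h =>
    obtain ⟨i, hi⟩ := h
    exact Or.inl (Subsingleton.elim i 0 ▸ hi)
  | copsTurn c' h _ ih =>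
    rcases ih with ih | ih
    · exact Or.inr ⟨rfl, ih ▸ h 0⟩
    · exact absurd ih.1 (by decide)
  | @robTurn c r _ ih =>
    by_contra hne
    obtain ⟨r', hr', hsafe⟩ := exists_escape (c 0) r fun h => hne (Or.inl h)
    rcases ih r' hr' with h | h
    · exact hsafe (Or.inl h.symm)
    · exact hsafe h.2

lemma one_knight_loses :
    ¬ CopsHaveWinningStrategy 1 (fun _ : Fin 1 => knightMove 4) (footMove 4) := by
  rintro ⟨c, hc⟩
  obtain ⟨r, hr⟩ := exists_uncontrolled (c 0)
  rcases controlled_of_copsWin (hc r) with h | h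
  · exact hr (Or.inl h.symm)
  · exact hr h.2

lemma zero_knights_lose :
    ¬ CopsHaveWinningStrategy 0 (fun _ : Fin 0 => knightMove 4) (footMove 4) := by
  rintro ⟨c, hc⟩
  have h := hc 0
  clear hc
  generalize (0 : V 4) = r, true = t at h
  induction h with
  | caught h => exact h.choose.elim0
  | copsTurn _ _ _ ih => exact ih
  | robTurn _ ih => exact ih _ (Or.inl rfl)

/-- On the `4 × 4` toroidal chess graph, with every cop a knight
and the robber on foot, the cop number is exactly `2`: two knight cops have a
winning strategy, and one knight cop does not. -/
theorem copNumber_knights_footRobber_four_eq_two :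
    copNumber 4 (fun _ _ => knightMove 4) (footMove 4) = 2 ∧
    CopsHaveWinningStrategy 2 (fun _ : Fin 2 => knightMove 4) (footMove 4) ∧
    ¬ CopsHaveWinningStrategy 1 (fun _ : Fin 1 => knightMove 4) (footMove 4) := by
  refine ⟨le_antisymm (Nat.sInf_le two_knights_win) ?_, two_knights_win, one_knight_loses⟩
  refine le_csInf ⟨2, two_knights_win⟩ fun k hk => ?_
  by_contra! hlt
  interval_cases k
  · exact zero_knights_lose hk
  · exact one_knight_loses hk
end

section
/- Let n ≥ 5 and consider the n×n toroidal chess graph with vertices in (ZMod n) × (ZMod n). For every vertex v and every pair of vertices c₁, c₂ (positions of two cops that are knights), at least one of the five vertices v, v+(1,0), v−(1,0), v+(0,1), v−(0,1) is not a knight-move target of c₁ and not a knight-move target of c₂. That is, two cops as knights cannot protect all five vertices of the 'plus' centered at v. -/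
/-- The eight knight steps, as integer vectors. -/
def knightSteps : List (ℤ × ℤ) :=
  [(1, 2), (1, -2), (-1, 2), (-1, -2), (2, 1), (2, -1), (-2, 1), (-2, -1)]

/-- The five vertices of the plus relative to its center, as integer vectors. -/
def plusOffset : Fin 5 → ℤ × ℤ :=
  ![(0, 0), (1, 0), (-1, 0), (0, 1), (0, -1)]

/-- The integer vector `p` is congruent to a knight step modulo `m`. -/
def Hits (m : ℕ) (p : ℤ × ℤ) : Prop :=
  ∃ k ∈ knightSteps, (m : ℤ) ∣ p.1 - k.1 ∧ (m : ℤ) ∣ p.2 - k.2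

instance (m : ℕ) (p : ℤ × ℤ) : Decidable (Hits m p) := by
  unfold Hits; infer_instance

/-- Reduction of an integer vector modulo `n`. -/
def toV (n : ℕ) (p : ℤ × ℤ) : V n := ((p.1 : ZMod n), (p.2 : ZMod n))

lemma toV_add (n : ℕ) (p q : ℤ × ℤ) : toV n (p + q) = toV n p + toV n q := by
  simp [toV]

lemma toV_eq_iff (n : ℕ) (p q : ℤ × ℤ) :
    toV n p = toV n q ↔ (n : ℤ) ∣ p.1 - q.1 ∧ (n : ℤ) ∣ p.2 - q.2 := by
  rw [eq_comm]
  simp [toV, Prod.ext_iff, ZMod.intCast_eq_intCast_iff_dvd_sub]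

lemma knightMove_iff (n : ℕ) (c w : V n) :
    knightMove n c w ↔ ∃ k ∈ knightSteps, w - c = toV n k := by
  simp [knightMove, knightSteps, toV]

lemma knightMove_iff_hits (n : ℕ) (c w : V n) (p : ℤ × ℤ) (h : w - c = toV n p) :
    knightMove n c w ↔ Hits n p := by
  simp only [knightMove_iff, h, toV_eq_iff, Hits]

lemma small_check : ∀ m ∈ [5, 6, 7], ∀ x ∈ Finset.Icc (-3 : ℤ) 3, ∀ y ∈ Finset.Icc (-3 : ℤ) 3,
    (Finset.univ.filter fun i => Hits m ((x, y) + plusOffset i)).card ≤ 2 := by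
  decide +kernel

/-- Divisibility by `n` of integers of absolute value at most `6` only depends on `min n 7`. -/
lemma dvd_min_seven (n : ℕ) (z : ℤ) (h₁ : -6 ≤ z) (h₂ : z ≤ 6) :
    (n : ℤ) ∣ z ↔ ((min n 7 : ℕ) : ℤ) ∣ z := by
  rcases le_total n 7 with h | h
  · rw [min_eq_left h]
  · rw [min_eq_right h]
    have key : ∀ m : ℕ, 7 ≤ m → ((m : ℤ) ∣ z ↔ z = 0) := fun m hm =>
      ⟨fun hd => Int.eq_zero_of_abs_lt_dvd hd (by rw [abs_lt]; omega), fun hz => hz ▸ dvd_zero _⟩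
    rw [key n h, key 7 le_rfl]

lemma knightSteps_bound : ∀ k ∈ knightSteps, (-2 ≤ k.1 ∧ k.1 ≤ 2) ∧ (-2 ≤ k.2 ∧ k.2 ≤ 2) := by
  decide

lemma plusOffset_bound : ∀ i, (-1 ≤ (plusOffset i).1 ∧ (plusOffset i).1 ≤ 1) ∧
    (-1 ≤ (plusOffset i).2 ∧ (plusOffset i).2 ≤ 1) := by
  decide

lemma hits_min_seven (n : ℕ) (p : ℤ × ℤ) (h₁ : -4 ≤ p.1 ∧ p.1 ≤ 4) (h₂ : -4 ≤ p.2 ∧ p.2 ≤ 4) :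
    Hits n p ↔ Hits (min n 7) p := by
  unfold Hits
  refine exists_congr fun k => and_congr_right fun hk => ?_
  have := knightSteps_bound k hk
  rw [dvd_min_seven n (p.1 - k.1) (by omega) (by omega),
    dvd_min_seven n (p.2 - k.2) (by omega) (by omega)]

lemma exists_small_center (n : ℕ) (v c : V n) (i : Fin 5)
    (h : knightMove n c (v + toV n (plusOffset i))) :
    ∃ x ∈ Finset.Icc (-3 : ℤ) 3, ∃ y ∈ Finset.Icc (-3 : ℤ) 3, v - c = toV n (x, y) := by
  obtain ⟨k, hk, e⟩ := (knightMove_iff _ _ _).1 h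
  have := knightSteps_bound k hk
  have := plusOffset_bound i
  refine ⟨k.1 - (plusOffset i).1, Finset.mem_Icc.2 (by omega),
    k.2 - (plusOffset i).2, Finset.mem_Icc.2 (by omega), ?_⟩
  have e' : toV n k = toV n (k.1 - (plusOffset i).1, k.2 - (plusOffset i).2)
      + toV n (plusOffset i) := by
    rw [← toV_add]; congr 1; ext <;> simp
  rw [e', ← sub_eq_iff_eq_add] at e
  rw [← e]; abel

open Classical in
/-- One knight protects at most two vertices of a plus. -/
lemma card_protected_le_two (n : ℕ) (hn : 5 ≤ n) (v c : V n) :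
    (Finset.univ.filter fun i => knightMove n c (v + toV n (plusOffset i))).card ≤ 2 := by
  by_cases hex : ∃ i, knightMove n c (v + toV n (plusOffset i))
  · obtain ⟨i, hi⟩ := hex
    obtain ⟨x, hx, y, hy, hv⟩ := exists_small_center n v c i hi
    have hm : min n 7 ∈ [5, 6, 7] := by
      simp only [List.mem_cons, List.not_mem_nil, or_false]; omega
    refine le_trans (Finset.card_le_card ?_) (small_check _ hm x hx y hy)
    intro j hj
    rw [Finset.mem_filter] at hj ⊢
    refine ⟨hj.1, ?_⟩
    have := plusOffset_bound j
    rw [Finset.mem_Icc] at hx hy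
    rw [← hits_min_seven n _ (by simp only [Prod.fst_add]; omega)
      (by simp only [Prod.snd_add]; omega)]
    refine (knightMove_iff_hits n c _ _ ?_).1 hj.2
    rw [toV_add, ← hv]; abel
  · push Not at hex
    simp [hex]

/-- For `n ≥ 5`, on the `n × n` toroidal chess graph, for every
vertex `v` and every pair of vertices `c₁, c₂` (two cops that are knights), at
least one of the five vertices `v`, `v + (1,0)`, `v − (1,0)`, `v + (0,1)`,
`v − (0,1)` is a knight-move target of neither `c₁` nor `c₂`: two knight cops
cannot protect all five vertices of the "plus" centered at `v`. -/
theorem two_knights_cannot_protect_plus (n : ℕ) (hn : 5 ≤ n) (v c₁ c₂ : V n) :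
    ∃ w : V n,
      (w = v ∨ w = v + (1, 0) ∨ w = v - (1, 0) ∨ w = v + (0, 1) ∨ w = v - (0, 1)) ∧
      ¬ knightMove n c₁ w ∧ ¬ knightMove n c₂ w := by
  classical
  have h₁ := card_protected_le_two n hn v c₁
  have h₂ := card_protected_le_two n hn v c₂
  obtain ⟨i, hi⟩ : ∃ i : Fin 5, ¬ knightMove n c₁ (v + toV n (plusOffset i)) ∧
      ¬ knightMove n c₂ (v + toV n (plusOffset i)) := by
    by_contra! hcon
    have hcover : (Finset.univ : Finset (Fin 5)) ⊆
        (Finset.univ.filter fun i => knightMove n c₁ (v + toV n (plusOffset i))) ∪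
        (Finset.univ.filter fun i => knightMove n c₂ (v + toV n (plusOffset i))) := by
      intro i _
      have := hcon i
      simp only [Finset.mem_union, Finset.mem_filter, Finset.mem_univ, true_and]
      tauto
    have hle := (Finset.card_le_card hcover).trans (Finset.card_union_le _ _)
    rw [Finset.card_univ, Fintype.card_fin] at hle
    omega
  refine ⟨_, ?_, hi⟩
  fin_cases i <;> simp [toV, plusOffset, sub_eq_add_neg]
end

section
/- Let n ≥ 5 and consider the n×n toroidal chess graph with vertices in (ZMod n) × (ZMod n). No single vertex c has knight-move targets containing all three of the horizontally consecutive vertices v−(1,0), v, v+(1,0); that is, a single cop as a knight cannot protect three consecutive vertices of a row (and, symmetrically, of a column). -/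
/-- A displacement `(x, y)` is a knight move: one coordinate is `±1` and the other is `±2`.
This form is visibly symmetric in the two coordinates. -/
def IsKnightStep {n : ℕ} (x y : ZMod n) : Prop :=
  ((x = 1 ∨ x = -1) ∧ (y = 2 ∨ y = -2)) ∨ ((x = 2 ∨ x = -2) ∧ (y = 1 ∨ y = -1))

theorem IsKnightStep.symm {n : ℕ} {x y : ZMod n} (h : IsKnightStep x y) :
    IsKnightStep y x := by
  unfold IsKnightStep at *
  tauto

theorem knightMove.isKnightStep {n : ℕ} {c w : V n} (h : knightMove n c w) :
    IsKnightStep (w.1 - c.1) (w.2 - c.2) := by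
  simp only [knightMove, Prod.ext_iff, Prod.fst_sub, Prod.snd_sub] at h
  unfold IsKnightStep
  tauto

theorem natCast_ne_zero_of_lt {n k : ℕ} (hk : 0 < k) (hkn : k < n) : (k : ZMod n) ≠ 0 := by
  rw [Ne, ZMod.natCast_eq_zero_iff]
  exact Nat.not_dvd_of_pos_of_lt hk hkn

/-- Two elements `a` and `-a` cannot accommodate three consecutive residues. -/
theorem not_three_in_pair {n : ℕ} (hn : 5 ≤ n) {a x : ZMod n}
    (h₁ : x - 1 = a ∨ x - 1 = -a) (h₂ : x = a ∨ x = -a) (h₃ : x + 1 = a ∨ x + 1 = -a) :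
    False := by
  have one_ne : (1 : ZMod n) ≠ 0 := by
    exact_mod_cast natCast_ne_zero_of_lt (k := 1) (by omega) (by omega)
  have two_ne : (2 : ZMod n) ≠ 0 := by
    exact_mod_cast natCast_ne_zero_of_lt (k := 2) (by omega) (by omega)
  grind

theorem no_three_in_line {n : ℕ} (hn : 5 ≤ n) {x y : ZMod n} (h₁ : IsKnightStep (x - 1) y)
    (h₂ : IsKnightStep x y) (h₃ : IsKnightStep (x + 1) y) : False := by
  have one_ne : (1 : ZMod n) ≠ 0 := by
    exact_mod_cast natCast_ne_zero_of_lt (k := 1) (by omega) (by omega)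
  have three_ne : (3 : ZMod n) ≠ 0 := by
    exact_mod_cast natCast_ne_zero_of_lt (k := 3) (by omega) (by omega)
  -- The fixed coordinate determines which of the two kinds of knight step occurs.
  have hy : ¬ ((y = 2 ∨ y = -2) ∧ (y = 1 ∨ y = -1)) := by
    rintro ⟨ha | ha, hb | hb⟩
    · exact one_ne (by linear_combination hb - ha)
    · exact three_ne (by linear_combination hb - ha)
    · exact three_ne (by linear_combination ha - hb)
    · exact one_ne (by linear_combination ha - hb)
  by_cases h : y = 2 ∨ y = -2
  · have key {z : ZMod n} (hz : IsKnightStep z y) : z = 1 ∨ z = -1 :=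
      hz.elim (fun hz => hz.1) (fun hz => (hy ⟨h, hz.2⟩).elim)
    exact not_three_in_pair hn (key h₁) (key h₂) (key h₃)
  · have key {z : ZMod n} (hz : IsKnightStep z y) : z = 2 ∨ z = -2 :=
      hz.elim (fun hz => (h hz.2).elim) (fun hz => hz.1)
    exact not_three_in_pair hn (key h₁) (key h₂) (key h₃)

/-- For `n ≥ 5`, on the `n × n` toroidal chess graph, no vertex
`c` has knight-move targets containing all three horizontally consecutive
vertices `v − (1,0)`, `v`, `v + (1,0)`; symmetrically, none has targets
containing the three vertically consecutive vertices `v − (0,1)`, `v`,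
`v + (0,1)`.  A single knight cop cannot protect three consecutive vertices of a
row or of a column. -/
theorem knight_cannot_protect_three_consecutive (n : ℕ) (hn : 5 ≤ n) (v c : V n) :
    ¬ (knightMove n c (v - (1, 0)) ∧ knightMove n c v ∧ knightMove n c (v + (1, 0))) ∧
    ¬ (knightMove n c (v - (0, 1)) ∧ knightMove n c v ∧ knightMove n c (v + (0, 1))) := by
  constructor
  · rintro ⟨h₁, h₂, h₃⟩
    refine no_three_in_line hn (x := v.1 - c.1) (y := v.2 - c.2) ?_ h₂.isKnightStep ?_
    · simpa [sub_right_comm] using h₁.isKnightStep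
    · simpa [add_sub_right_comm] using h₃.isKnightStep
  · rintro ⟨h₁, h₂, h₃⟩
    refine no_three_in_line hn (x := v.2 - c.2) (y := v.1 - c.1) ?_ h₂.isKnightStep.symm ?_
    · simpa [sub_right_comm] using h₁.isKnightStep.symm
    · simpa [add_sub_right_comm] using h₃.isKnightStep.symm
end

section
/- Let n ≥ 5 and let G be the n×n toroidal chess graph, with three cops that are knights and a robber on foot. Consider any game position in which it is the robber's turn to move, the robber occupies a vertex r, one cop occupies r+(1,1), a second cop occupies r−(1,1), and the third cop occupies an arbitrary vertex. From any such position the cops have a winning strategy (the robber will be caught). -/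
theorem knight_step_right (n : ℕ) (v : V n) :
    Relation.ReflTransGen (knightMove n) v (v + (1, 0)) := by
  have h1 : knightMove n v (v + (1, 2)) := by simp [knightMove]
  have h2 : knightMove n (v + (1, 2)) (v + (1, 2) + (2, -1)) := by simp [knightMove]
  have h3 : knightMove n (v + (1, 2) + (2, -1)) (v + (1, 0)) := by
    have : v + (1, 0) - (v + (1, 2) + (2, -1)) = ((-2, -1) : V n) := by
      ext <;> simp only [Prod.fst_sub, Prod.snd_sub, Prod.fst_add, Prod.snd_add] <;> ring
    simp [knightMove, this]
  exact ((Relation.ReflTransGen.single h1).tail h2).tail h3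

theorem knight_step_up (n : ℕ) (v : V n) :
    Relation.ReflTransGen (knightMove n) v (v + (0, 1)) := by
  have h1 : knightMove n v (v + (2, 1)) := by simp [knightMove]
  have h2 : knightMove n (v + (2, 1)) (v + (2, 1) + (-1, 2)) := by simp [knightMove]
  have h3 : knightMove n (v + (2, 1) + (-1, 2)) (v + (0, 1)) := by
    have : v + (0, 1) - (v + (2, 1) + (-1, 2)) = ((-1, -2) : V n) := by
      ext <;> simp only [Prod.fst_sub, Prod.snd_sub, Prod.fst_add, Prod.snd_add] <;> ring
    simp [knightMove, this]
  exact ((Relation.ReflTransGen.single h1).tail h2).tail h3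

/-- The knight graph on the torus is connected. -/
theorem knight_reachable (n : ℕ) [NeZero n] (v w : V n) :
    Relation.ReflTransGen (knightMove n) v w := by
  have hx : ∀ (a : ℕ) (u : V n), Relation.ReflTransGen (knightMove n) u (u + ((a : ZMod n), 0)) := by
    intro a u
    induction a with
    | zero => simp [Prod.mk_zero_zero, Relation.ReflTransGen.refl]
    | succ a ih =>
      refine ih.trans ?_
      convert knight_step_right n (u + ((a : ZMod n), 0)) using 1
      ext <;> simp [add_assoc]
  have hy : ∀ (b : ℕ) (u : V n), Relation.ReflTransGen (knightMove n) u (u + (0, (b : ZMod n))) := by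
    intro b u
    induction b with
    | zero => simp [Prod.mk_zero_zero, Relation.ReflTransGen.refl]
    | succ b ih =>
      refine ih.trans ?_
      convert knight_step_up n (u + (0, (b : ZMod n))) using 1
      ext <;> simp [add_assoc]
  -- Every residue mod `n ≠ 0` is the cast of a natural number, so nonnegative steps suffice.
  convert (hx (w - v).1.val v).trans (hy (w - v).2.val _) using 1
  ext <;> simp

/-- If the robber leaves `r`, one of the two pinning cops catches him at once. -/
theorem copsWin_of_footMove (n : ℕ) (r x s : V n) (h : footMove n r s) :
    CopsWin (fun _ : Fin 3 => knightMove n) (footMove n)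
      ![r + (1, 1), r - (1, 1), x] s true := by
  have key : knightMove n (r + (1, 1)) s ∨ knightMove n (r - (1, 1)) s := by
    have e1 : s - (r + (1, 1)) = (s - r) - (1, 1) := by abel
    have e2 : s - (r - (1, 1)) = (s - r) + (1, 1) := by abel
    unfold knightMove
    rw [e1, e2]
    rcases h with h | h | h | h <;> rw [h] <;> norm_num
  rcases key with h | h
  · refine .copsTurn ![s, r - (1, 1), x] ?_ (.caught ⟨0, rfl⟩)
    intro i
    fin_cases i <;> simp [stayOr, h]
  · refine .copsTurn ![r + (1, 1), s, x] ?_ (.caught ⟨1, rfl⟩)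
    intro i
    fin_cases i <;> simp [stayOr, h]

theorem copsWin_of_reachable (n : ℕ) (r x : V n) (h : Relation.ReflTransGen (knightMove n) x r) :
    CopsWin (fun _ : Fin 3 => knightMove n) (footMove n)
      ![r + (1, 1), r - (1, 1), x] r false := by
  induction h using Relation.ReflTransGen.head_induction_on with
  | refl => exact .caught ⟨2, rfl⟩
  | @head x y hxy _ ih =>
    refine .robTurn fun s hs => ?_
    rcases hs with rfl | hs
    · refine .copsTurn _ ?_ ih
      intro i
      fin_cases i <;> simp [stayOr, hxy]
    · exact copsWin_of_footMove n r x s hs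

/-- For `n ≥ 5`, on the `n × n` toroidal chess graph with three
knight cops and a robber on foot: from any position in which it is the robber's
turn to move, the robber occupies `r`, one cop occupies `r + (1,1)`, a second cop
occupies `r − (1,1)`, and the third cop occupies an arbitrary vertex `x`, the
cops have a winning strategy (the robber will be caught). -/
theorem pinned_robber_is_caught (n : ℕ) (hn : 5 ≤ n) (r x : V n) :
    CopsWin (fun _ : Fin 3 => knightMove n) (footMove n)
      ![r + (1, 1), r - (1, 1), x] r false := by
  have : NeZero n := ⟨by omega⟩
  exact copsWin_of_reachable n r x (knight_reachable n x r)
end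

section
/- Let n ≥ 5 and let G be the n×n toroidal chess graph, with three cops that are knights and a robber on foot. Suppose the three cops start on the vertices a, a+(2,2), and a+(4,0) for some vertex a. Then, by always making all three cops move identically (so the three cops' positions remain a translate a'+(0,0), a'+(2,2), a'+(4,0) of the starting formation), the cops can guarantee that after a finite number of moves the robber occupies a vertex of the translated 3×5 rectangular array {a'+(i,j) : 0 ≤ i ≤ 4, 0 ≤ j ≤ 2}, where a' is the current anchor of the formation. -/
/-- `FormationTraps n a r t`: three knight cops occupy the translated formation
`a + (0,0)`, `a + (2,2)`, `a + (4,0)` with anchor `a`, the robber (on foot)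
occupies `r`, and it is the cops' turn iff `t = true`.  The cops always move all
three pieces identically (each cops' turn, all three cops either all stay or all
make the same knight move, so their positions remain a translate of the starting
formation and the anchor `a` itself stays or makes a knight move); the predicate
says the cops can guarantee that after a finite number of moves the robber
occupies a vertex of the translated `3 × 5` rectangular array
`{a' + (i,j) : 0 ≤ i ≤ 4, 0 ≤ j ≤ 2}`, where `a'` is the current anchor. -/
inductive FormationTraps (n : ℕ) : V n → V n → Bool → Prop
  | trapped {a r : V n} {t : Bool}
      (h : ∃ i j : ℕ, i ≤ 4 ∧ j ≤ 2 ∧ r = a + ((i : ZMod n), (j : ZMod n))) :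
      FormationTraps n a r t
  | copsTurn {a r : V n} (a' : V n) (h : stayOr (knightMove n) a a')
      (hw : FormationTraps n a' r false) : FormationTraps n a r true
  | robTurn {a r : V n}
      (hw : ∀ r', stayOr (footMove n) r r' → FormationTraps n a r' true) :
      FormationTraps n a r false

/-- If `(u, v)` lies in the box `|u| ≤ B + 2`, `|v| ≤ B + 1` with its corners removed, a single knight
step or a pass moves it into the box `|u| ≤ B`, `|v| ≤ B - 1`. The step `(p, q)` is that of the cops,
so it is subtracted from the robber's relative position. -/
lemma exists_knight_step (B u v : ℤ) (hB : 2 ≤ B) (hu : |u| ≤ B + 2) (hv : |v| ≤ B + 1)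
    (huv : |u| + |v| ≤ 2 * B + 2) :
    ∃ p q : ℤ, ((p = 0 ∧ q = 0) ∨ ((p = 1 ∨ p = -1) ∧ (q = 2 ∨ q = -2)) ∨
      ((p = 2 ∨ p = -2) ∧ (q = 1 ∨ q = -1))) ∧ |u - p| ≤ B ∧ |v - q| ≤ B - 1 := by
  -- Signs of `u` and `v`, giving the directions in which the formation has to move.
  obtain ⟨s, hs, hsu, hsu0⟩ : ∃ s : ℤ, (s = 1 ∨ s = -1) ∧ u = s * |u| ∧ 0 ≤ s * u := by
    rcases abs_cases u with h | h
    · exact ⟨1, Or.inl rfl, by omega, by omega⟩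
    · exact ⟨-1, Or.inr rfl, by omega, by omega⟩
  obtain ⟨t, ht, htv, htv0⟩ : ∃ t : ℤ, (t = 1 ∨ t = -1) ∧ v = t * |v| ∧ 0 ≤ t * v := by
    rcases abs_cases v with h | h
    · exact ⟨1, Or.inl rfl, by omega, by omega⟩
    · exact ⟨-1, Or.inr rfl, by omega, by omega⟩
  by_cases h0 : |u| ≤ B ∧ |v| ≤ B - 1
  · exact ⟨0, 0, by simp, by simpa using h0.1, by simpa using h0.2⟩
  by_cases h1 : |v| ≤ B
  · refine ⟨2 * s, t, ?_, ?_, ?_⟩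
    · omega
    all_goals
      rcases hs with rfl | rfl <;> rcases ht with rfl | rfl <;> rw [abs_le] <;> omega
  · refine ⟨s, 2 * t, ?_, ?_, ?_⟩
    · omega
    all_goals
      rcases hs with rfl | rfl <;> rcases ht with rfl | rfl <;> rw [abs_le] <;> omega

/-- The vertex at integer offset `(u, v)` from the centre of the array with anchor `a`. -/
def atOffset {n : ℕ} (a : V n) (u v : ℤ) : V n := a + (((u + 2 : ℤ) : ZMod n), ((v + 1 : ℤ) : ZMod n))

/-- The cops' half of a round: if every position in the box `|u| ≤ B`, `|v| ≤ B - 1` is won with the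
robber to move, then every position in the enlarged box without corners is won with the cops to
move. -/
lemma traps_of_box {n : ℕ} {B : ℤ} (hB : 2 ≤ B)
    (ih : ∀ (a : V n) (u v : ℤ), |u| ≤ B → |v| ≤ B - 1 → FormationTraps n a (atOffset a u v) false)
    (a : V n) (u v : ℤ) (hu : |u| ≤ B + 2) (hv : |v| ≤ B + 1) (huv : |u| + |v| ≤ 2 * B + 2) :
    FormationTraps n a (atOffset a u v) true := by
  obtain ⟨p, q, hpq, hp, hq⟩ := exists_knight_step B u v hB hu hv huv
  refine .copsTurn (a + ((p : ZMod n), (q : ZMod n))) ?_ ?_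
  · rcases hpq with ⟨rfl, rfl⟩ | ⟨rfl | rfl, rfl | rfl⟩ | ⟨rfl | rfl, rfl | rfl⟩ <;>
      simp [stayOr, knightMove]
  · have h := ih (a + ((p : ZMod n), (q : ZMod n))) (u - p) (v - q) hp hq
    have e : atOffset (a + ((p : ZMod n), (q : ZMod n))) (u - p) (v - q) = atOffset a u v := by
      ext <;> simp [atOffset] <;> ring
    rwa [e] at h

/-- A robber to move is trapped from every box; the box of size `k + 2` takes `k` rounds. -/
lemma traps_box {n : ℕ} (k : ℕ) : ∀ (a : V n) (u v : ℤ), |u| ≤ (k : ℤ) + 2 → |v| ≤ (k : ℤ) + 2 - 1 →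
    FormationTraps n a (atOffset a u v) false := by
  induction k with
  | zero =>
    intro a u v hu hv
    rw [abs_le] at hu hv
    refine .trapped ⟨(u + 2).toNat, (v + 1).toNat, by omega, by omega, ?_⟩
    have h1 : (((u + 2).toNat : ℤ) : ZMod n) = ((u + 2 : ℤ) : ZMod n) := by
      rw [Int.toNat_of_nonneg (by omega)]
    have h2 : (((v + 1).toNat : ℤ) : ZMod n) = ((v + 1 : ℤ) : ZMod n) := by
      rw [Int.toNat_of_nonneg (by omega)]
    rw [Int.cast_natCast] at h1 h2
    rw [h1, h2, atOffset]
  | succ k ih =>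
    intro a u v hu hv
    push_cast at hu hv
    refine .robTurn fun r' hr' => ?_
    -- The robber's step lifted to integers, of `ℓ¹`-length at most one.
    obtain ⟨x, y, hxy, rfl⟩ : ∃ x y : ℤ, |x| + |y| ≤ 1 ∧ r' = atOffset a (u + x) (v + y) := by
      have key : ∀ x y : ℤ, r' - atOffset a u v = ((x : ZMod n), (y : ZMod n)) →
          r' = atOffset a (u + x) (v + y) := by
        intro x y h
        rw [sub_eq_iff_eq_add] at h
        rw [h]
        ext <;> simp [atOffset] <;> ring
      rcases hr' with h | h | h | h | h
      · exact ⟨0, 0, by simp, by simpa using h⟩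
      · exact ⟨1, 0, by simp, key 1 0 (by simpa using h)⟩
      · exact ⟨-1, 0, by simp, key (-1) 0 (by simpa using h)⟩
      · exact ⟨0, 1, by simp, key 0 1 (by simpa using h)⟩
      · exact ⟨0, -1, by simp, key 0 (-1) (by simpa using h)⟩
    have hx := abs_add_le u x
    have hy := abs_add_le v y
    have hx0 := abs_nonneg x
    have hy0 := abs_nonneg y
    exact traps_of_box (B := (k : ℤ) + 2) (by omega) ih a _ _ (by omega) (by omega) (by omega)

/-- For `n ≥ 5`, on the `n × n` toroidal chess graph with three
knight cops and a robber on foot: if the three cops start on the vertices `a`,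
`a + (2,2)` and `a + (4,0)`, then, by always moving all three cops identically
(so that their positions remain a translate `a' + (0,0)`, `a' + (2,2)`,
`a' + (4,0)` of the starting formation), the cops can guarantee that after a
finite number of moves the robber (starting anywhere) occupies a vertex of the
translated rectangular array `{a' + (i,j) : 0 ≤ i ≤ 4, 0 ≤ j ≤ 2}`, where `a'`
is the current anchor of the formation. -/
theorem formation_traps_robber (n : ℕ) (hn : 5 ≤ n) (a r : V n) :
    FormationTraps n a r true := by
  obtain ⟨x, hx⟩ := ZMod.intCast_surjective (r - a).1
  obtain ⟨y, hy⟩ := ZMod.intCast_surjective (r - a).2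
  have hr : r = atOffset a (x - 2) (y - 1) := by
    ext <;> simp [atOffset, hx, hy]
  rw [hr]
  -- Any box containing the initial offset will do.
  refine .copsTurn a (Or.inl rfl)
    (traps_box ((x - 2).natAbs + (y - 1).natAbs) a _ _ ?_ ?_) <;> push_cast
  · linarith [abs_nonneg (y - 1)]
  · linarith [abs_nonneg (x - 2)]
end

section
/- Let n ≥ 3 and let G be the n×n toroidal chess graph. In the game of Cops and Robbers on G with a single cop that is a chief and a robber on foot, the cop has a winning strategy; that is, with one chief cop and a foot robber, c(G) = 1. -/
/-- Chief (queen) moves: the target is in the same row, column, or diagonal as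
the current vertex, i.e. differs from it by `(k,0)`, `(0,k)`, `(k,k)` or
`(k,−k)` mod `n` for some nonzero `k`. -/
def chiefMove (n : ℕ) (v w : V n) : Prop :=
  ∃ k : ZMod n, k ≠ 0 ∧
    (w - v = (k, 0) ∨ w - v = (0, k) ∨ w - v = (k, k) ∨ w - v = (k, -k))

/-- A chief's turn, including staying put: this absorbs the requirement `k ≠ 0` of `chiefMove`. -/
lemma stayOr_chief {n : ℕ} {v w : V n} (k : ZMod n)
    (h : w - v = (k, 0) ∨ w - v = (0, k) ∨ w - v = (k, k) ∨ w - v = (k, -k)) :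
    stayOr (chiefMove n) v w := by
  by_cases hk : k = 0
  · left
    subst hk
    have h0 : w - v = 0 := by
      rcases h with h | h | h | h <;> rw [h] <;> simp
    exact sub_eq_zero.mp h0
  · exact Or.inr ⟨k, hk, h⟩

/-- A single chief, on its turn, moves to `w`. -/
lemma win_of_move {n : ℕ} {v r : V n} (w : V n) (k : ZMod n)
    (h : w - v = (k, 0) ∨ w - v = (0, k) ∨ w - v = (k, k) ∨ w - v = (k, -k))
    (hw : CopsWin (fun _ : Fin 1 => chiefMove n) (footMove n) (fun _ => w) r false) :
    CopsWin (fun _ : Fin 1 => chiefMove n) (footMove n) (fun _ => v) r true :=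
  .copsTurn (fun _ => w) (fun _ => stayOr_chief k h) hw

lemma win_attack {n : ℕ} {v r : V n} (k : ZMod n)
    (h : r - v = (k, 0) ∨ r - v = (0, k) ∨ r - v = (k, k) ∨ r - v = (k, -k)) :
    CopsWin (fun _ : Fin 1 => chiefMove n) (footMove n) (fun _ => v) r true :=
  win_of_move r k h (.caught ⟨0, rfl⟩)

/-- The robber, to move at difference `(0, e)` with `e = ±1`, can only reach attacked vertices. -/
lemma win_adjacent {n : ℕ} {v r : V n} (e : ZMod n) (he : e = 1 ∨ e = -1)
    (h : r - v = (0, e)) :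
    CopsWin (fun _ : Fin 1 => chiefMove n) (footMove n) (fun _ => v) r false := by
  refine .robTurn fun r' hr => ?_
  have key : r' - v = (r' - r) + (0, e) := by rw [← h]; abel
  rcases hr with rfl | hr | hr | hr | hr
  · exact win_attack e (by simp [h])
  · rw [hr] at key
    refine win_attack 1 ?_
    rcases he with rfl | rfl <;> simp [key]
  · rw [hr] at key
    refine win_attack (-1) ?_
    rcases he with rfl | rfl <;> simp [key]
  · rw [hr] at key
    exact win_attack (1 + e) (by simp [key])
  · rw [hr] at key
    exact win_attack (-1 + e) (by simp [key])

/-- The robber, to move at difference `(k, 0)`, can only keep the second coordinate (and be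
captured) or reach difference `(k, ±1)`, which the chief turns into `(0, ±1)`. -/
lemma win_aligned {n : ℕ} {v r : V n} (k : ZMod n) (h : r - v = (k, 0)) :
    CopsWin (fun _ : Fin 1 => chiefMove n) (footMove n) (fun _ => v) r false := by
  refine .robTurn fun r' hr => ?_
  have key : r' - v = (r' - r) + (k, 0) := by rw [← h]; abel
  have step : ∀ e : ZMod n, e = 1 ∨ e = -1 → r' - r = (0, e) →
      CopsWin (fun _ : Fin 1 => chiefMove n) (footMove n) (fun _ => v) r' true := by
    intro e he hr
    refine win_of_move (v + (k, 0)) k (by simp) (win_adjacent e he ?_)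
    rw [← sub_sub, key, hr]
    simp
  rcases hr with rfl | hr | hr | hr | hr
  · exact win_attack k (by simp [h])
  · rw [hr] at key
    exact win_attack (1 + k) (by simp [key])
  · rw [hr] at key
    exact win_attack (-1 + k) (by simp [key])
  · exact step 1 (.inl rfl) hr
  · exact step (-1) (.inr rfl) hr

lemma chief_wins (n : ℕ) :
    CopsHaveWinningStrategy 1 (fun _ : Fin 1 => chiefMove n) (footMove n) := by
  refine ⟨fun _ => (0, 0), fun r => ?_⟩
  exact win_of_move (0, r.2) r.2 (by simp) (win_aligned r.1 (by ext <;> simp))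

lemma not_win_zero {n : ℕ} {copMove : Fin 0 → V n → V n → Prop} {robMove : V n → V n → Prop}
    {c : Fin 0 → V n} {r : V n} {t : Bool} : ¬ CopsWin copMove robMove c r t := by
  intro h
  induction h with
  | caught h => exact h.elim fun i _ => i.elim0
  | copsTurn _ _ _ ih => exact ih
  | robTurn _ ih => exact ih _ (.inl rfl)

/-- For `n ≥ 3`, on the `n × n` toroidal chess graph with a
single cop that is a chief and a robber on foot, the cop has a winning strategy;
that is, with one chief cop (any further cops being on foot) and a foot robber,
`c(G) = 1`. -/
theorem one_chief_catches_foot_robber (n : ℕ) (hn : 3 ≤ n) :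
    CopsHaveWinningStrategy 1 (fun _ : Fin 1 => chiefMove n) (footMove n) ∧
    copNumber n
      (fun _ i => if (i : ℕ) = 0 then chiefMove n else footMove n)
      (footMove n) = 1 := by
  refine ⟨chief_wins n, ?_⟩
  refine le_antisymm (Nat.sInf_le ?_) (le_csInf ⟨1, ?_⟩ fun k hk => ?_)
  · simpa using chief_wins n
  · simpa using chief_wins n
  · rcases Nat.eq_zero_or_pos k with rfl | hk0
    · obtain ⟨c, hc⟩ := hk
      exact (not_win_zero (hc 0)).elim
    · exact hk0
end

section
/- Let n ≥ 3, let 1 ≤ m < n, and let G be the n×n toroidal chess graph, with a single cop that is a chief and an m-speedy robber. The chief has a strategy guaranteeing that at every point of the game, either the robber has already been captured or the robber occupies a vertex in the same row as the vertex he originally occupied; that is, a chief can guarantee that an m-speedy robber never leaves the row it originally occupies. -/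
/-- `m`-speedy moves: the target is in the same row or column at distance at most
`m` from the current vertex, i.e. differs from it by `(j,0)` or `(0,j)` mod `n`
for some integer `j` with `1 ≤ |j| ≤ m`. -/
def speedyMove (n m : ℕ) (v w : V n) : Prop :=
  ∃ j : ℤ, 1 ≤ |j| ∧ |j| ≤ (m : ℤ) ∧
    (w - v = ((j : ZMod n), 0) ∨ w - v = (0, (j : ZMod n)))

/-- The history of the play after `t` full rounds: the list of states
`(cop position, robber position)` from time `t` back down to time `0`. -/
def hist {n : ℕ} (c r : ℕ → V n) : ℕ → List (V n × V n)
  | 0 => [(c 0, r 0)]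
  | t + 1 => (c (t + 1), r (t + 1)) :: hist c r t

/-- The chief's response to the chief at `p.1` and the robber at `p.2`: capture if they share a
column, and otherwise move horizontally into the robber's column. -/
def shadow {n : ℕ} (p : V n × V n) : V n :=
  if p.1.1 = p.2.1 then p.2 else (p.2.1, p.1.2)

lemma shadow_fst {n : ℕ} (p : V n × V n) : (shadow p).1 = p.2.1 := by
  unfold shadow
  split_ifs <;> rfl

lemma shadow_eq_of_fst_eq {n : ℕ} {v w : V n} (h : v.1 = w.1) : shadow (v, w) = w :=
  if_pos h

lemma stayOr_chiefMove_shadow {n : ℕ} (v w : V n) : stayOr (chiefMove n) v (shadow (v, w)) := by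
  by_cases h : v.1 = w.1
  · rw [shadow_eq_of_fst_eq h]
    by_cases h2 : v.2 = w.2
    · exact Or.inl (Prod.ext h.symm h2.symm)
    · refine Or.inr ⟨w.2 - v.2, fun h0 => h2 (sub_eq_zero.mp h0).symm, Or.inr (Or.inl ?_)⟩
      exact Prod.ext (sub_eq_zero.mpr h.symm) rfl
  · have hs : shadow (v, w) = (w.1, v.2) := if_neg h
    rw [hs]
    refine Or.inr ⟨w.1 - v.1, fun h0 => h (sub_eq_zero.mp h0).symm, Or.inl ?_⟩
    exact Prod.ext rfl (sub_self _)

/-- A robber who changes row stays in his column. -/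
lemma speedy_fst_or_snd_eq {n m : ℕ} {v w : V n} (h : stayOr (speedyMove n m) v w) :
    w.1 = v.1 ∨ w.2 = v.2 := by
  rcases h with rfl | ⟨j, -, -, h | h⟩
  · exact Or.inl rfl
  · exact Or.inr (sub_eq_zero.mp (congrArg Prod.snd h))
  · exact Or.inl (sub_eq_zero.mp (congrArg Prod.fst h))

lemma head_hist {n : ℕ} (c r : ℕ → V n) (t : ℕ) :
    (hist c r t).headD 0 = (c t, r t) := by
  cases t <;> rfl

/-- Let `n ≥ 3` and `1 ≤ m < n`.  On the `n × n` toroidal chess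
graph with a single chief cop and an `m`-speedy robber, the chief has a strategy
(a starting vertex `c₀` together with a response `σ` to every history of the
play) guaranteeing that at every point of the game, either the robber has
already been captured (at some interleaved point so far, the cop occupied the
robber's vertex) or the robber occupies a vertex in the same row (second
coordinate) as the vertex it originally occupied: a chief can guarantee that an
`m`-speedy robber never leaves the row it originally occupies.  Here `c t` and
`r t` denote the positions after the cop's, resp. the robber's, `t`-th move
(the cop moving first in each round), the cop's moves being dictated by `σ` and
the robber's moves being arbitrary allowable ones; the chief's dictated moves
are moreover always allowable chief moves. -/
theorem chief_confines_speedy_robber_to_initial_row (n m : ℕ)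
    (hn : 3 ≤ n) (hm : 1 ≤ m) (hmn : m < n) :
    ∃ c₀ : V n, ∃ σ : List (V n × V n) → V n,
      ∀ c r : ℕ → V n,
        c 0 = c₀ →
        (∀ t, c (t + 1) = σ (hist c r t)) →
        (∀ t, stayOr (speedyMove n m) (r t) (r (t + 1))) →
        (∀ t, stayOr (chiefMove n) (c t) (c (t + 1))) ∧
        (∀ t, (∃ s ≤ t, c s = r s ∨ c (s + 1) = r s) ∨ (r t).2 = (r 0).2) := by
  refine ⟨0, fun l => shadow (l.headD 0), fun c r _ hc hr => ?_⟩
  replace hc : ∀ t, c (t + 1) = shadow (c t, r t) := fun t =>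
    (hc t).trans (congrArg shadow (head_hist c r t))
  refine ⟨fun t => hc t ▸ stayOr_chiefMove_shadow _ _, fun t => ?_⟩
  induction t with
  | zero => exact Or.inr rfl
  | succ t ih =>
    rcases ih with ⟨s, hs, h⟩ | ih
    · exact Or.inl ⟨s, hs.trans t.le_succ, h⟩
    · rcases speedy_fst_or_snd_eq (hr t) with h | h
      · refine Or.inl ⟨t + 1, le_rfl, Or.inr ?_⟩
        rw [hc (t + 1)]
        apply shadow_eq_of_fst_eq
        rw [h, hc t, shadow_fst]
      · exact Or.inr (h.trans ih)
end

section
/- Let m ≥ 1. For all sufficiently large n, the following holds on the n×n toroidal chess graph: in the game of Cops and Robbers with an m-speedy robber, one cop that is a chief together with 2⌈m/3⌉ cops on foot have a winning strategy (a total of 2⌈m/3⌉ + 1 cops suffice to capture the robber). -/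
/-- The column, as an integer, of foot cop `i`: for `1 ≤ i ≤ q` it belongs to the left wall, which
attacks the cells `L - 3q + 1, …, L`, and for `q < i ≤ 2q` to the right wall, which attacks the
cells `R, …, R + 3q - 1`. -/
def wallCol (q : ℕ) (L R : ℤ) (i : ℕ) : ℤ :=
  if i ≤ q then L - 1 - 3 * ((i : ℤ) - 1) else R + 1 + 3 * ((i : ℤ) - q - 1)

/-- The position with the chief (cop `0`) on `p` and the foot cops forming the two walls in
row `h`. -/
def wallPos (n q : ℕ) (L R : ℤ) (h : ZMod n) (p : V n) (i : Fin (2 * q + 1)) : V n :=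
  if (i : ℕ) = 0 then p else ((wallCol q L R i : ℤ), h)

/-- The moves of the team: cop `0` is a chief, all others are on foot. -/
abbrev teamMove (n q : ℕ) (i : Fin (2 * q + 1)) : V n → V n → Prop :=
  if (i : ℕ) = 0 then chiefMove n else footMove n

lemma CopsWin.capture {n k : ℕ} {copMove : Fin k → V n → V n → Prop}
    {robMove : V n → V n → Prop} {c : Fin k → V n} {r : V n} (i : Fin k)
    (h : stayOr (copMove i) (c i) r) : CopsWin copMove robMove c r true := by
  refine .copsTurn (Function.update c i r) (fun j => ?_) (.caught ⟨i, by simp⟩)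
  by_cases hj : j = i
  · subst hj; simpa using h
  · left; simp [hj]

lemma stayOr_chief_row {n : ℕ} (a b c : ZMod n) : stayOr (chiefMove n) (a, c) (b, c) := by
  by_cases h : b = a
  · left; rw [h]
  · right; exact ⟨b - a, sub_ne_zero.2 h, Or.inl (by simp)⟩

lemma stayOr_chief_col {n : ℕ} (a b c : ZMod n) : stayOr (chiefMove n) (c, a) (c, b) := by
  by_cases h : b = a
  · left; rw [h]
  · right; exact ⟨b - a, sub_ne_zero.2 h, Or.inr (Or.inl (by simp))⟩

lemma stayOr_foot_row {n : ℕ} (a b : ℤ) (c : ZMod n) (h : |b - a| ≤ 1) :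
    stayOr (footMove n) ((a : ZMod n), c) ((b : ZMod n), c) := by
  rw [abs_le] at h
  obtain h | h | h : b = a ∨ b = a + 1 ∨ b = a - 1 := by omega
  · left; rw [h]
  · right; left; subst h; simp
  · right; right; left; subst h; simp

/-- If the foot cops can walk from the walls `L, R, h` to the walls `L', R', h'`, and the chief,
standing in row `b`, moves to the robber's column, then only the horizontal moves of the robber
remain to be considered. -/
lemma CopsWin.step {n m q : ℕ} {L R L' R' : ℤ} {h h' b x' y : ZMod n} {x : ℤ}
    (hfoot : ∀ i : ℕ, stayOr (footMove n) ((wallCol q L R i : ZMod n), h)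
      ((wallCol q L' R' i : ZMod n), h'))
    (hrob : ∀ j : ℤ, 1 ≤ |j| → |j| ≤ m → CopsWin (teamMove n q) (speedyMove n m)
      (wallPos n q L' R' h' (x, b)) (((x + j : ℤ) : ZMod n), y) true) :
    CopsWin (teamMove n q) (speedyMove n m) (wallPos n q L R h (x', b)) ((x : ZMod n), y) true := by
  refine .copsTurn (wallPos n q L' R' h' (x, b)) (fun i => ?_) (.robTurn fun r' hr' => ?_)
  · by_cases hi : (i : ℕ) = 0
    · simpa [wallPos, teamMove, hi] using stayOr_chief_row _ _ _
    · simpa [wallPos, teamMove, hi] using hfoot i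
  · have hcol : ∀ z, CopsWin (teamMove n q) (speedyMove n m)
        (wallPos n q L' R' h' (x, b)) ((x : ZMod n), z) true := fun z =>
      .capture 0 (by simpa [wallPos, teamMove] using stayOr_chief_col _ _ _)
    rcases hr' with rfl | ⟨j, hj1, hjm, hj | hj⟩
    · exact hcol _
    · rw [sub_eq_iff_eq_add] at hj
      subst hj
      simpa [add_comm] using hrob j hj1 hjm
    · rw [sub_eq_iff_eq_add] at hj
      subst hj
      simpa using hcol (j + y)

/-- A robber on one of the `3q` cells attacked by the left wall is captured. -/
lemma copsWin_left {n m q : ℕ} {L R z : ℤ} {y : ZMod n} {p : V n}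
    (h1 : L - 3 * q < z) (h2 : z ≤ L) :
    CopsWin (teamMove n q) (speedyMove n m) (wallPos n q L R y p) ((z : ZMod n), y) true := by
  obtain ⟨d, hd⟩ : ∃ d : ℕ, L - z = d := ⟨(L - z).toNat, by omega⟩
  refine .capture ⟨d / 3 + 1, by omega⟩ ?_
  have hq : d / 3 + 1 ≤ q := by omega
  simp only [wallPos, teamMove, Nat.succ_ne_zero, if_false]
  refine stayOr_foot_row _ _ _ ?_
  rw [wallCol, if_pos hq, abs_le]
  omega

/-- A robber on one of the `3q` cells attacked by the right wall is captured. -/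
lemma copsWin_right {n m q : ℕ} {L R z : ℤ} {y : ZMod n} {p : V n}
    (h1 : R ≤ z) (h2 : z < R + 3 * q) :
    CopsWin (teamMove n q) (speedyMove n m) (wallPos n q L R y p) ((z : ZMod n), y) true := by
  obtain ⟨d, hd⟩ : ∃ d : ℕ, z - R = d := ⟨(z - R).toNat, by omega⟩
  refine .capture ⟨q + d / 3 + 1, by omega⟩ ?_
  have hq : ¬ q + d / 3 + 1 ≤ q := by omega
  simp only [wallPos, teamMove, Nat.succ_ne_zero, if_false]
  refine stayOr_foot_row _ _ _ ?_
  rw [wallCol, if_neg hq, abs_le]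
  omega

/-- Once the walls stand in the robber's row, with the robber in the gap between them, they close
in on the robber; the proof is by induction on a bound `g` for the width of the gap. -/
lemma copsWin_squeeze {n m q : ℕ} (hmq : m ≤ 3 * q) (b y : ZMod n) (g : ℕ) :
    ∀ (L R x : ℤ) (x' : ZMod n), R - L ≤ g → L < x → x < R →
      CopsWin (teamMove n q) (speedyMove n m) (wallPos n q L R y (x', b)) ((x : ZMod n), y)
        true := by
  induction g with
  | zero => intro L R x x' h1 h2 h3; push_cast at h1; omega
  | succ g ih =>
    intro L R x x' hg hL hR
    push_cast at hg
    -- One wall advances by a cell, unless the robber touches both walls.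
    obtain ⟨L', R', hL0, hL1, hR0, hR1, hL', hR', hgap⟩ : ∃ L' R' : ℤ, L ≤ L' ∧ L' ≤ L + 1 ∧
        R - 1 ≤ R' ∧ R' ≤ R ∧ L' < x ∧ x < R' ∧
          (R' - L' ≤ g ∨ (x = L' + 1 ∧ x = R' - 1)) := by
      by_cases h1 : x = L + 1
      · by_cases h2 : x = R - 1
        · exact ⟨L, R, by omega⟩
        · exact ⟨L, R - 1, by omega⟩
      · exact ⟨L + 1, R, by omega⟩
    refine CopsWin.step (L' := L') (R' := R') (h' := y) (fun i => ?_) (fun j hj1 hjm => ?_)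
    · refine stayOr_foot_row _ _ _ ?_
      rw [abs_le]
      unfold wallCol
      split_ifs <;> omega
    · rw [abs_le] at hjm
      have hj0 : j ≠ 0 := by rintro rfl; simp at hj1
      by_cases h1 : x + j ≤ L'
      · exact copsWin_left (by omega) h1
      by_cases h2 : R' ≤ x + j
      · exact copsWin_right h2 (by omega)
      exact ih L' R' (x + j) _ (by omega) (by omega) (by omega)

/-- The walls `L = 0`, `R = n` walk from row `y - k` to the robber's row `y`. -/
lemma copsWin_approach {n m q : ℕ} (hn : 1 ≤ n) (hq : 1 ≤ q) (hmq : m ≤ 3 * q) (b y : ZMod n)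
    (k : ℕ) : ∀ (x : ℤ) (x' : ZMod n),
      CopsWin (teamMove n q) (speedyMove n m) (wallPos n q 0 n (y - k) (x', b))
        ((x : ZMod n), y) true := by
  induction k with
  | zero =>
    intro x x'
    rw [Nat.cast_zero, sub_zero]
    have hx : (x : ZMod n) = ((x % n : ℤ) : ZMod n) := by simp
    have h0 : 0 ≤ x % n := Int.emod_nonneg _ (by omega)
    have h1 : x % n < n := Int.emod_lt_of_pos _ (by omega)
    rw [hx]
    rcases h0.eq_or_lt with h | h
    · exact copsWin_left (by omega) (by omega)
    · exact copsWin_squeeze hmq b y n 0 n _ _ (by omega) h h1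
  | succ k ih =>
    intro x x'
    refine CopsWin.step (fun i => Or.inr (Or.inr (Or.inr (Or.inl ?_)))) (fun j _ _ => ih _ _)
    simp

/-- Let `m ≥ 1`.  For all sufficiently large `n`, on the
`n × n` toroidal chess graph, in the game with an `m`-speedy robber, one cop
that is a chief (cop `0`) together with `2⌈m/3⌉` cops on foot (note
`⌈m/3⌉ = (m + 2) / 3` in natural-number arithmetic) have a winning strategy:
a total of `2⌈m/3⌉ + 1` cops suffice to capture the robber. -/
theorem chief_with_enough_foot_cops_wins (m : ℕ) (hm : 1 ≤ m) :
    ∃ N : ℕ, ∀ n : ℕ, N ≤ n →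
      CopsHaveWinningStrategy (2 * ((m + 2) / 3) + 1)
        (fun i : Fin (2 * ((m + 2) / 3) + 1) =>
          if (i : ℕ) = 0 then chiefMove n else footMove n)
        (speedyMove n m) := by
  refine ⟨1, fun n hn => ?_⟩
  have : NeZero n := ⟨by omega⟩
  refine ⟨wallPos n ((m + 2) / 3) 0 n 0 (0, 0), fun ⟨x, y⟩ => ?_⟩
  have h := copsWin_approach (m := m) (q := (m + 2) / 3) hn (by omega) (by omega) 0 y y.val
    x.val 0
  simp only [ZMod.natCast_val, ZMod.cast_id', id_eq, sub_self, ZMod.intCast_cast] at h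
  exact h
end
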